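/- Let D be a digraph on vertex type V and let u, v, w be distinct vertices. If there is a path in D from u to w, then there is a path from u to w in the detour D↑v, and also a path from u to w in the bypass D↑↑v (the induced subdigraph of D↑v on V \ {v}). -/

import Mathlib

/-- The detour of a digraph (irreflexive relation) `A` at a vertex `v`: no arcs into or
out of `v`; for `x ≠ y` both distinct from `v`, an arc `x → y` iff `A x y`, or
`A x v` and `A v y`. -/
def detour {V : Type*} (A : V → V → Prop) (v : V) : V → V → Prop :=
  fun x y => x ≠ v ∧ y ≠ v ∧ x ≠ y ∧ (A x y ∨ (A x v ∧ A v y))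

/-- The bypass of `A` at `v`: the induced subdigraph of `detour A v` on `V \ {v}`. -/
def bypass {V : Type*} (A : V → V → Prop) (v : V) :
    {x : V // x ≠ v} → {x : V // x ≠ v} → Prop :=
  fun x y => detour A v x.val y.val

/-!
Walk along the path backwards from `w`. A visit to `v` has no counterpart in the bypass, so there
the walk is resumed from an arbitrary in-neighbour `a ≠ v` of `v`: if the path continues to
`y ≠ v`, then `a → v → y` is shortcut by an arc `a → y` of the detour, or by nothing when `a = y`.
-/

section

open Relation

variable {V : Type*} {A : V → V → Prop} {v : V}

theorem reflGen_bypass_of_adj {x y : {z : V // z ≠ v}} (h : A x y ∨ A x v ∧ A v y) :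
    ReflGen (bypass A v) x y := by
  rw [reflGen_iff]
  by_cases hxy : x = y
  · exact .inl hxy.symm
  · exact .inr ⟨x.2, y.2, Subtype.coe_ne_coe.mpr hxy, h⟩

theorem reflTransGen_bypass_of_eq_or_adj {x : V} {a w : {x : V // x ≠ v}}
    (hxw : ReflTransGen A x w) (ha : a = x ∨ x = v ∧ A a v) :
    ReflTransGen (bypass A v) a w := by
  induction hxw using ReflTransGen.head_induction_on generalizing a with
  | refl =>
    obtain haw | ⟨hwv, -⟩ := ha
    · rw [Subtype.ext haw]
    · exact absurd hwv w.2
  | @head x y hxy _ ih =>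
    by_cases hyv : y = v
    · have hav : A a v := by
        obtain rfl | ⟨-, hav⟩ := ha
        · exact hyv ▸ hxy
        · exact hav
      exact ih (.inr ⟨hyv, hav⟩)
    · have hay : A a y ∨ A a v ∧ A v y := by
        obtain rfl | ⟨rfl, hav⟩ := ha
        · exact .inl hxy
        · exact .inr ⟨hav, hxy⟩
      have step : ReflGen (bypass A v) a ⟨y, hyv⟩ := reflGen_bypass_of_adj hay
      exact step.to_reflTransGen.trans (ih (.inl rfl))

theorem reflTransGen_detour_of_bypass {x y : {z : V // z ≠ v}}
    (h : ReflTransGen (bypass A v) x y) : ReflTransGen (detour A v) x y :=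
  ReflTransGen.lift Subtype.val (fun _ _ hxy => hxy) _ _ h

theorem path_detour_bypass_general {u w : {x : V // x ≠ v}} (h : ReflTransGen A u w) :
    ReflTransGen (detour A v) u w ∧ ReflTransGen (bypass A v) u w :=
  have hbypass := reflTransGen_bypass_of_eq_or_adj h (.inl rfl)
  ⟨reflTransGen_detour_of_bypass hbypass, hbypass⟩

end

/-- If `u`, `v`, `w` are distinct and there is a path in `D` from `u` to `w`, then there
are paths from `u` to `w` in both the detour `D↑v` and the bypass `D↑↑v`. -/
theorem path_detour_bypass {V : Type*} (A : V → V → Prop) (hA : Irreflexive A)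
    (u v w : V) (huv : u ≠ v) (hvw : v ≠ w) (huw : u ≠ w)
    (h : Relation.ReflTransGen A u w) :
    Relation.ReflTransGen (detour A v) u w ∧
      Relation.ReflTransGen (bypass A v) ⟨u, huv⟩ ⟨w, Ne.symm hvw⟩ :=
  path_detour_bypass_general (u := ⟨u, huv⟩) (w := ⟨w, hvw.symm⟩) h
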